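/- arXiv:1910.07299 — 4 statements merged into one kernel-verified Lean document; each statement's English description precedes it below -/
import Mathlib

section
/- Let M be an acyclic module over a finite alphabet Λ with finite node set S and finite input set I. Then every node s ∈ S admits an output function: there exist an integer m ≥ 1 and a function O : (Λ^I)^m → Λ such that M(x,J)_s = O(J) for every configuration x ∈ Λ^S and every sequence J = (i_1,…,i_m) of m input configurations. -/
/-- A module over alphabet `Λ` with node set `S` and input set `I`:
a family of local functions `f s : Λ^S → Λ^I → Λ`. -/
structure AModule (Λ S I : Type) where
  f : S → (S → Λ) → (I → Λ) → Λ

namespace AModule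

variable {Λ S I : Type}

/-- One-step update `M(x,i)`. -/
def upd (M : AModule Λ S I) (x : S → Λ) (i : I → Λ) : S → Λ :=
  fun s => M.f s x i

/-- Iterated update `M(x,(i_1,…,i_m))`, defined by
`M(x,∅) = x` and `M(x,(i_1,…,i_m)) = M(M(x,i_1),(i_2,…,i_m))`. -/
def seqUpd (M : AModule Λ S I) (x : S → Λ) {m : ℕ} (J : Fin m → I → Λ) : S → Λ :=
  (List.ofFn J).foldl M.upd x

/-- Node `s` influences node `s'`: two configurations over `S ∪ I` differing
exactly at `s` (so with the same input part) on which `f_{s'}` differs. -/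
def Influences (M : AModule Λ S I) (s s' : S) : Prop :=
  ∃ (x x' : S → Λ) (i : I → Λ),
    (∀ r, r ≠ s → x r = x' r) ∧ x s ≠ x' s ∧ M.f s' x i ≠ M.f s' x' i

/-- `M` is acyclic: its interaction digraph has no directed cycle. -/
def Acyclic (M : AModule Λ S I) : Prop :=
  ∀ s, ¬ Relation.TransGen M.Influences s s

/-- `O` is an output function of delay `m` for node `s`. -/
def IsOutputFn (M : AModule Λ S I) (s : S) {m : ℕ}
    (O : (Fin m → I → Λ) → Λ) : Prop :=
  ∀ (x : S → Λ) (J : Fin m → I → Λ), M.seqUpd x J s = O J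

/-- The set of delays `m ≥ 1` for which `s` admits an output function. -/
def delaySet (M : AModule Λ S I) (s : S) : Set ℕ :=
  {m | 1 ≤ m ∧ ∃ O : (Fin m → I → Λ) → Λ, M.IsOutputFn s O}

/-- The complete recursive wiring `↻_ω M` as a map on configurations:
`F(x)_s = f_s(x, (x_{ω(α)})_{α ∈ I})`. -/
def wireF (M : AModule Λ S I) (ω : I → S) : (S → Λ) → (S → Λ) :=
  fun x => M.upd x (fun α => x (ω α))

/-- The input sequence of length `k` generated by `x`:
`Ĵ(x)^k_ℓ = F^{ℓ-1}(x)|_{ω(I)}`. -/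
def genSeq (M : AModule Λ S I) (ω : I → S) (x : S → Λ) (k : ℕ) :
    Fin k → I → Λ :=
  fun ℓ α => (M.wireF ω)^[ℓ.val] x (ω α)

end AModule

/-!
The local function `f_s` only reads the nodes that influence `s`, so if each of those is a function
of the last `m` inputs, then `s` is a function of the last `m + 1` inputs. In a finite acyclic
digraph this propagates from the sources to every node. As all large delays work for each node, the
in-neighbours of `s` can be given a common delay.
-/

theorem dependsOn_of_forall_update_eq {ι β : Type*} {α : ι → Type*} [Finite ι] [DecidableEq ι]
    {f : (∀ i, α i) → β} {s : Set ι}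
    (h : ∀ i ∉ s, ∀ x a, f (Function.update x i a) = f x) : DependsOn f s := by
  intro x y hxy
  -- Pass from `x` to `y` by changing one coordinate at a time.
  have piecewise_eq (T : Finset ι) : f (T.piecewise y x) = f x := by
    induction T using Finset.induction_on with
    | empty => rw [Finset.piecewise_empty]
    | insert i T hi ih =>
      rw [Finset.piecewise_insert, ← ih]
      by_cases his : i ∈ s
      · rw [← hxy i his, ← Finset.piecewise_eq_of_notMem T y x hi, Function.update_eq_self]
      · exact h i his _ _
  cases nonempty_fintype ι
  rw [← piecewise_eq Finset.univ, Finset.piecewise_univ]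

namespace AModule

variable {Λ S I : Type} (M : AModule Λ S I)

theorem dependsOn_influences [Finite S] (s : S) (i : I → Λ) :
    DependsOn (fun x => M.f s x i) {r | M.Influences r s} := by
  classical
  refine dependsOn_of_forall_update_eq fun r hr x a => ?_
  by_contra hne
  refine hr ⟨Function.update x r a, x, i, fun _ h => Function.update_of_ne h a x, ?_, hne⟩
  rw [Function.update_self]
  intro hself
  exact hne (by rw [hself, Function.update_eq_self])

theorem seqUpd_succ (x : S → Λ) {m : ℕ} (J : Fin (m + 1) → I → Λ) :
    M.seqUpd x J = M.upd (M.seqUpd x (Fin.init J)) (J (Fin.last m)) := by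
  simp only [seqUpd, List.ofFn_succ', List.concat_eq_append, List.foldl_append,
    List.foldl_cons, List.foldl_nil, Fin.init_def]

variable {M}

theorem Acyclic.wellFounded_influences [Finite S] (hM : M.Acyclic) :
    WellFounded M.Influences :=
  have : Std.Irrefl (Relation.TransGen M.Influences) := ⟨hM⟩
  Subrelation.wf Relation.TransGen.single
    (Finite.wellFounded_of_trans_of_irrefl (Relation.TransGen M.Influences))

theorem succ_mem_delaySet [Finite S] [Nonempty Λ] {s : S} {m : ℕ}
    (h : ∀ r, M.Influences r s → m ∈ M.delaySet r) : m + 1 ∈ M.delaySet s := by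
  have exists_output (r : S) :
      ∃ O : (Fin m → I → Λ) → Λ, M.Influences r s → M.IsOutputFn r O := by
    by_cases hr : M.Influences r s
    · obtain ⟨-, O, hO⟩ := h r hr
      exact ⟨O, fun _ => hO⟩
    · exact ⟨Classical.arbitrary _, fun hr' => absurd hr' hr⟩
  choose O hO using exists_output
  refine ⟨m.succ_pos, fun J => M.f s (fun r => O r (Fin.init J)) (J (Fin.last m)), fun x J => ?_⟩
  rw [seqUpd_succ]
  exact M.dependsOn_influences s _ fun r hr => hO r hr x (Fin.init J)

end AModule

open Filter in
theorem statement0_general {Λ S I : Type} [Finite S] [Nonempty Λ]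
    (M : AModule Λ S I) (hM : M.Acyclic) (s : S) : ∀ᶠ m in atTop, m ∈ M.delaySet s := by
  induction s using hM.wellFounded_influences.induction with
  | _ s ih =>
    have common_delay : ∀ᶠ m in atTop, ∀ r, M.Influences r s → m ∈ M.delaySet r := by
      simpa only [eventually_all] using ih
    rw [← map_add_atTop_eq_nat 1, eventually_map]
    exact common_delay.mono fun _ => AModule.succ_mem_delaySet

/-- every node of an acyclic module admits an output function. -/
theorem statement0 {Λ S I : Type} [Fintype Λ] [Fintype S] [Fintype I]
    (hΛ : 2 ≤ Fintype.card Λ)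
    (M : AModule Λ S I) (hM : M.Acyclic) (s : S) :
    ∃ m : ℕ, 1 ≤ m ∧ ∃ O : (Fin m → I → Λ) → Λ, M.IsOutputFn s O := by
  have : Nonempty Λ := Fintype.card_pos_iff.mp (by omega)
  exact (statement0_general M hM s).exists
end

section
/- Let M be an acyclic module over a finite alphabet Λ with input set I and node set S, let ω : I → S be a total function, and let F = ↻_ω M. Let J be an input sequence of length k such that M(x,J) is independent of x (denote this common configuration M(J)). If the input sequence of length k generated by M(J) equals J, i.e. Ĵ(M(J))^k = J, then F^k(M(J)) = M(J); in particular M(J) lies on a periodic orbit of F whose size divides k. -/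
/-!
Feeding `x` the inputs that it generates itself makes the module follow the wired dynamics:
`M(x, Ĵ(x)^k) = F^k(x)`. If `Ĵ(y)^k = J` and `M(y, J) = y`, this reads `F^k(y) = y`.
-/

namespace AModule

variable {Λ S I : Type}

theorem seqUpd_succ_last (M : AModule Λ S I) (x : S → Λ) {m : ℕ} (J : Fin (m + 1) → I → Λ) :
    M.seqUpd x J = M.upd (M.seqUpd x (Fin.init J)) (J (Fin.last m)) := by
  rw [seqUpd, List.ofFn_succ_last, List.foldl_concat]
  rfl

theorem seqUpd_genSeq (M : AModule Λ S I) (ω : I → S) (x : S → Λ) (k : ℕ) :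
    M.seqUpd x (M.genSeq ω x k) = (M.wireF ω)^[k] x := by
  induction k with
  | zero => rfl
  | succ k ih =>
    calc M.seqUpd x (M.genSeq ω x (k + 1))
        = M.upd (M.seqUpd x (M.genSeq ω x k)) (M.genSeq ω x (k + 1) (Fin.last k)) :=
          M.seqUpd_succ_last x _
      _ = M.upd ((M.wireF ω)^[k] x) (M.genSeq ω x (k + 1) (Fin.last k)) := by rw [ih]
      _ = M.wireF ω ((M.wireF ω)^[k] x) := rfl
      _ = (M.wireF ω)^[k + 1] x := (Function.iterate_succ_apply' _ k x).symm

end AModule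

theorem statement5_general {Λ S I : Type} (M : AModule Λ S I) (ω : I → S) (k : ℕ)
    (J : Fin k → I → Λ) (y : S → Λ) (hy : M.seqUpd y J = y) (hgen : M.genSeq ω y k = J) :
    (M.wireF ω)^[k] y = y ∧ Function.minimalPeriod (M.wireF ω) y ∣ k := by
  have periodic : Function.IsPeriodicPt (M.wireF ω) k y :=
    calc (M.wireF ω)^[k] y = M.seqUpd y (M.genSeq ω y k) := (M.seqUpd_genSeq ω y k).symm
      _ = M.seqUpd y J := by rw [hgen]
      _ = y := hy
  exact ⟨periodic, periodic.minimalPeriod_dvd⟩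

/-- if `M(x,J)` is independent of `x` (with common value `y`) and
the input sequence of length `k` generated by `y` is `J`, then `F^k(y) = y`,
and `y` lies on a periodic orbit of `F = ↻_ω M` whose size divides `k`. -/
theorem statement5 {Λ S I : Type} [Fintype Λ] [Fintype S] [Fintype I]
    (hΛ : 2 ≤ Fintype.card Λ)
    (M : AModule Λ S I) (hM : M.Acyclic) (ω : I → S) (k : ℕ)
    (J : Fin k → I → Λ) (y : S → Λ)
    (hy : ∀ x : S → Λ, M.seqUpd x J = y)
    (hgen : M.genSeq ω y k = J) :
    (M.wireF ω)^[k] y = y ∧ Function.minimalPeriod (M.wireF ω) y ∣ k := by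
  exact statement5_general M ω k J y (hy y) hgen
end

section
/- Let M be an acyclic module over a finite alphabet Λ with input set I and node set S such that every node admits an output function of delay at most D, let ω : I → S be total, and let F = ↻_ω M. Then F has a fixed point if and only if there exists an input configuration i ∈ Λ^I such that, writing J for the constant sequence (i, i, …, i) of length D and M(J) for the common value of M(x,J) over all x ∈ Λ^S, one has M(J)_{ω(α)} = i_α for every α ∈ I; moreover in that case M(J) is a fixed point of F. -/
/-!
A configuration `x` is fixed by `↻_ω M` exactly when it is fixed by `M(·,i)` for its own input
`i = x ∘ ω`. Output functions of delay at most `D` make the `D`-th iterate of `M(·,i)` constant, and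
a map with a constant iterate has that constant as its only fixed point. So the fixed points of
`↻_ω M` are the configurations `M(i,…,i)` which project through `ω` back to `i`.
-/

theorem isFixedPt_iff_eq_of_iterate_eq {X : Type*} {g : X → X} {n : ℕ} {c : X}
    (hg : ∀ x, g^[n] x = c) {x : X} : Function.IsFixedPt g x ↔ x = c := by
  constructor
  · intro hx
    exact (hx.iterate n).symm.trans (hg x)
  · rintro rfl
    calc g x = g (g^[n] x) := by rw [hg]
      _ = g^[n] (g x) := (Function.Commute.self_iterate g n).eq x
      _ = x := hg (g x)

namespace AModule

variable {Λ S I : Type} {M : AModule Λ S I}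

theorem seqUpd_append (M : AModule Λ S I) (x : S → Λ) {k m : ℕ}
    (J : Fin k → I → Λ) (K : Fin m → I → Λ) :
    M.seqUpd x (Fin.append J K) = M.seqUpd (M.seqUpd x J) K := by
  simp only [seqUpd, List.ofFn_fin_append, List.foldl_append]

theorem seqUpd_const (M : AModule Λ S I) (x : S → Λ) (n : ℕ) (i : I → Λ) :
    M.seqUpd x (fun _ : Fin n => i) = (M.upd · i)^[n] x := by
  rw [seqUpd, List.ofFn_const]
  induction n generalizing x with
  | zero => rfl
  | succ _ ih => exact ih (M.upd x i)

theorem IsOutputFn.comp_natAdd {s : S} {m : ℕ} {O : (Fin m → I → Λ) → Λ}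
    (hO : M.IsOutputFn s O) (k : ℕ) :
    M.IsOutputFn s fun J : Fin (k + m) → I → Λ => O (J ∘ Fin.natAdd k) := by
  intro x J
  calc M.seqUpd x J s
      = M.seqUpd x (Fin.append (J ∘ Fin.castAdd m) (J ∘ Fin.natAdd k)) s := by
        rw [Function.comp_def, Function.comp_def, Fin.append_castAdd_natAdd]
    _ = M.seqUpd (M.seqUpd x (J ∘ Fin.castAdd m)) (J ∘ Fin.natAdd k) s := by
        rw [seqUpd_append]
    _ = O (J ∘ Fin.natAdd k) := hO _ _

theorem exists_isOutputFn_of_le {s : S} {m n : ℕ} (hmn : m ≤ n)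
    (h : ∃ O : (Fin m → I → Λ) → Λ, M.IsOutputFn s O) :
    ∃ O : (Fin n → I → Λ) → Λ, M.IsOutputFn s O := by
  obtain ⟨k, rfl⟩ := Nat.exists_eq_add_of_le' hmn
  obtain ⟨O, hO⟩ := h
  exact ⟨_, hO.comp_natAdd k⟩

section Wiring

variable {D : ℕ} {O : S → (Fin D → I → Λ) → Λ} {ω : I → S}

theorem seqUpd_eq_of_isOutputFn (hO : ∀ s, M.IsOutputFn s (O s)) (x : S → Λ)
    (J : Fin D → I → Λ) : M.seqUpd x J = fun s => O s J :=
  funext fun s => hO s x J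

theorem isFixedPt_upd_iff (hO : ∀ s, M.IsOutputFn s (O s)) {i : I → Λ} {x : S → Λ} :
    Function.IsFixedPt (M.upd · i) x ↔ x = fun s => O s fun _ => i :=
  isFixedPt_iff_eq_of_iterate_eq fun y => by
    rw [← seqUpd_const, seqUpd_eq_of_isOutputFn hO]

theorem wireF_eq_self_iff (hO : ∀ s, M.IsOutputFn s (O s)) {x : S → Λ} :
    M.wireF ω x = x ↔ x = fun s => O s fun _ => x ∘ ω :=
  isFixedPt_upd_iff hO

theorem wireF_output_eq_self (hO : ∀ s, M.IsOutputFn s (O s)) {i : I → Λ}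
    (hi : ∀ α, O (ω α) (fun _ => i) = i α) :
    M.wireF ω (fun s => O s fun _ => i) = fun s => O s fun _ => i := by
  have input_eq : (fun s => O s fun _ => i) ∘ ω = i := funext hi
  rw [wireF_eq_self_iff hO, input_eq]

theorem exists_wireF_eq_self_iff (hO : ∀ s, M.IsOutputFn s (O s)) :
    (∃ x, M.wireF ω x = x) ↔ ∃ i : I → Λ, ∀ α, O (ω α) (fun _ => i) = i α := by
  constructor
  · rintro ⟨x, hx⟩
    exact ⟨x ∘ ω, fun α => (congrFun ((wireF_eq_self_iff hO).mp hx) (ω α)).symm⟩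
  · rintro ⟨i, hi⟩
    exact ⟨_, wireF_output_eq_self hO hi⟩

end Wiring

end AModule

theorem statement14_general {Λ S I : Type} (M : AModule Λ S I) (D : ℕ)
    (hdelay : ∀ s : S, ∃ m ≤ D, ∃ O : (Fin m → I → Λ) → Λ, M.IsOutputFn s O)
    (ω : I → S) :
    ((∃ x : S → Λ, M.wireF ω x = x) ↔
      ∃ i : I → Λ, ∀ (x₀ : S → Λ) (α : I),
        M.seqUpd x₀ (fun _ : Fin D => i) (ω α) = i α) ∧
    (∀ i : I → Λ,
      (∀ (x₀ : S → Λ) (α : I), M.seqUpd x₀ (fun _ : Fin D => i) (ω α) = i α) →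
      ∀ x₀ : S → Λ,
        M.wireF ω (M.seqUpd x₀ (fun _ : Fin D => i)) =
          M.seqUpd x₀ (fun _ : Fin D => i)) := by
  have hdelay_eq (s : S) : ∃ O : (Fin D → I → Λ) → Λ, M.IsOutputFn s O :=
    let ⟨_, hmD, hm⟩ := hdelay s
    AModule.exists_isOutputFn_of_le hmD hm
  choose O hO using hdelay_eq
  have input_iff (i : I → Λ) :
      (∀ (x₀ : S → Λ) (α : I), M.seqUpd x₀ (fun _ : Fin D => i) (ω α) = i α) ↔
        ∀ α, O (ω α) (fun _ => i) = i α := by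
    simp only [AModule.seqUpd_eq_of_isOutputFn hO]
    -- An `i` alone makes `S → Λ` nonempty, through `O`, so the quantifier over `x₀` is not vacuous.
    exact ⟨fun h => h fun s => O s fun _ => i, fun h _ => h⟩
  simp only [input_iff]
  simp only [AModule.seqUpd_eq_of_isOutputFn hO]
  exact ⟨AModule.exists_wireF_eq_self_iff hO, fun _ hi _ => AModule.wireF_output_eq_self hO hi⟩

/-- `F = ↻_ω M` has a fixed point iff there is an input
configuration `i` such that the common value `M(J)` of `M(x₀,J)` for the
constant sequence `J = (i,…,i)` of length `D` projects through `ω` back to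
`i`; moreover in that case `M(J)` is a fixed point of `F`. -/
theorem statement14 {Λ S I : Type} [Fintype Λ] [Fintype S] [Fintype I]
    (hΛ : 2 ≤ Fintype.card Λ)
    (M : AModule Λ S I) (hM : M.Acyclic) (D : ℕ)
    (hdelay : ∀ s : S, ∃ m : ℕ, 1 ≤ m ∧ m ≤ D ∧
      ∃ O : (Fin m → I → Λ) → Λ, M.IsOutputFn s O)
    (ω : I → S) :
    ((∃ x : S → Λ, M.wireF ω x = x) ↔
      ∃ i : I → Λ, ∀ (x₀ : S → Λ) (α : I),
        M.seqUpd x₀ (fun _ : Fin D => i) (ω α) = i α) ∧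
    (∀ i : I → Λ,
      (∀ (x₀ : S → Λ) (α : I), M.seqUpd x₀ (fun _ : Fin D => i) (ω α) = i α) →
      ∀ x₀ : S → Λ,
        M.wireF ω (M.seqUpd x₀ (fun _ : Fin D => i)) =
          M.seqUpd x₀ (fun _ : Fin D => i)) := by
  refine statement14_general M D (fun s => ?_) ω
  obtain ⟨m, -, hmD, hm⟩ := hdelay s
  exact ⟨m, hmD, hm⟩
end

section
/- Let n ≥ 1 and let φ : (Fin n → Bool) → Bool. Consider the Boolean automata network F on node set {v_1,…,v_n} ∪ {p, q} with local functions f_{v_j}(x) = x_{v_j} for each j, f_p(x) = φ(x_{v_1},…,x_{v_n}), and f_q(x) = (¬x_p) ∧ (¬x_q), with parallel update F(x)_s = f_s(x). Then F has a fixed point if and only if φ is satisfiable, i.e. there exists an assignment a : Fin n → Bool with φ(a) = true. -/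
/-- The Boolean automata network of the fixed-point reduction: variable nodes
`Sum.inl j` keep their state, the solver node `Sum.inr false` computes `φ` on
the variable nodes, and the oscillator node `Sum.inr true` computes
`¬ solver ∧ ¬ oscillator`. -/
def solverNet (n : ℕ) (φ : (Fin n → Bool) → Bool)
    (x : Fin n ⊕ Bool → Bool) : Fin n ⊕ Bool → Bool
  | Sum.inl j => x (Sum.inl j)
  | Sum.inr false => φ (fun j => x (Sum.inl j))
  | Sum.inr true => !(x (Sum.inr false)) && !(x (Sum.inr true))

/-- If `p` were false, the oscillator `q` would negate its own state at every step. -/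
theorem not_and_not_eq_right_iff (p q : Bool) : (!p && !q) = q ↔ p = true ∧ q = false := by
  decide +revert

section solverNet

open Function

variable {n : ℕ} {φ : (Fin n → Bool) → Bool}

theorem isFixedPt_solverNet_iff {x : Fin n ⊕ Bool → Bool} :
    IsFixedPt (solverNet n φ) x ↔
      φ (x ∘ Sum.inl) = true ∧ x (Sum.inr false) = true ∧ x (Sum.inr true) = false := by
  calc
    IsFixedPt (solverNet n φ) x
    _ ↔ φ (x ∘ Sum.inl) = x (Sum.inr false) ∧
          (!x (Sum.inr false) && !x (Sum.inr true)) = x (Sum.inr true) := by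
      simp only [IsFixedPt, funext_iff, Sum.forall, Bool.forall_bool, solverNet, implies_true,
        true_and, comp_def]
    _ ↔ φ (x ∘ Sum.inl) = x (Sum.inr false) ∧
          x (Sum.inr false) = true ∧ x (Sum.inr true) = false := by
      rw [not_and_not_eq_right_iff]
    _ ↔ φ (x ∘ Sum.inl) = true ∧ x (Sum.inr false) = true ∧ x (Sum.inr true) = false :=
      and_congr_left fun ⟨solver_on, _⟩ => by rw [solver_on]

theorem fixedPoints_solverNet :
    fixedPoints (solverNet n φ) = (Sum.elim · Bool.not) '' {a | φ a = true} := by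
  ext x
  rw [mem_fixedPoints, isFixedPt_solverNet_iff]
  constructor
  · rintro ⟨satisfied, solver_on, oscillator_off⟩
    refine ⟨x ∘ Sum.inl, satisfied, ?_⟩
    ext (j | _ | _)
    · rfl
    · exact solver_on.symm
    · exact oscillator_off.symm
  · rintro ⟨a, satisfied, rfl⟩
    exact ⟨satisfied, rfl, rfl⟩

end solverNet

/-- the network with identity variable nodes, a solver node and
an oscillator node has a fixed point iff `φ` is satisfiable. -/
theorem statement16 (n : ℕ) (hn : 1 ≤ n) (φ : (Fin n → Bool) → Bool) :
    (∃ x : Fin n ⊕ Bool → Bool, solverNet n φ x = x) ↔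
      ∃ a : Fin n → Bool, φ a = true := by
  change (Function.fixedPoints (solverNet n φ)).Nonempty ↔ {a | φ a = true}.Nonempty
  rw [fixedPoints_solverNet, Set.image_nonempty]
end
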